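/- The generating function Σ_{n≥5} #F_n^2 · t^n equals 16t⁵(1 − 3t)/((1 − 2t)³(1 − 4t)²(1 − 6t)) as a formal power series identity. -/

import Mathlib

open scoped Classical

noncomputable def numKinks {n : ℕ} (π : Equiv.Perm (Fin n)) : ℕ :=
  (Finset.univ.filter (fun i : Fin n =>
    0 < (i : ℕ) ∧ ∀ j : Fin n, (j : ℕ) < (i : ℕ) →
      (π j : ℕ) + 1 ≠ (π i : ℕ) ∧ (π i : ℕ) + 1 ≠ (π j : ℕ))).card

noncomputable def F (n d : ℕ) : ℕ :=
  (Finset.univ.filter (fun π : Equiv.Perm (Fin n) => numKinks π = d)).card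

/-!
Prepend a new first value `p` to a permutation `π`, moving the values `≥ p` up by one. Call a
position of `π` a block start if it is a kink or the first position. The kinks of the new
permutation are the block starts of `π` whose value is not next to the gap where `p` was inserted.
No two block starts have consecutive values, so a gap is next to at most one of them, and exactly
`2 (d + 1)` of the gaps are next to one when `π` has `d` kinks. Hence
`F (n + 2) (d + 1) = 2 (d + 2) F (n + 1) (d + 1) + (n - 2 d) F (n + 1) d`, which says that
`K d = ∑ F (n + 1) d Xⁿ` satisfies `(1 - 2 (d + 2) X) K (d + 1) = X (X (d⁄dX) K d - 2 d K d)`.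
Solving this from `K 0 = 1 / (1 - 2 X)` yields `K 1` and then `K 2`.
-/

open Equiv Finset

section SuccAbove

variable {n : ℕ} {p : Fin (n + 1)} {a b : Fin n}

lemma val_succAbove_add_one_eq_iff :
    (p.succAbove a : ℕ) + 1 = p.succAbove b ↔ (a : ℕ) + 1 = b ∧ a.succ ≠ p := by
  grind [Fin.succAbove]

lemma val_add_one_eq_val_succAbove_iff :
    (p : ℕ) + 1 = p.succAbove a ↔ a.castSucc = p := by
  grind [Fin.succAbove]

lemma val_succAbove_add_one_eq_val_iff :
    (p.succAbove a : ℕ) + 1 = p ↔ a.succ = p := by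
  grind [Fin.succAbove]

end SuccAbove

section Derivative

open PowerSeries

variable {R : Type*} [CommSemiring R]

lemma coeff_X_mul_derivative (f : R⟦X⟧) (n : ℕ) : coeff n (X * d⁄dX R f) = n * coeff n f := by
  cases n <;> simp [coeff_succ_X_mul, coeff_derivative, mul_comm]

lemma derivative_ofNat (k : ℕ) [k.AtLeastTwo] : d⁄dX R (ofNat(k) : R⟦X⟧) = 0 :=
  (d⁄dX R).map_natCast k

end Derivative

section Prepend

variable {n : ℕ}

/-- The permutation of `Fin (n + 1)` whose first value is `p` and whose remaining values are in the
same relative order as those of `π`. -/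
def prependPerm (p : Fin (n + 1)) (π : Perm (Fin n)) : Perm (Fin (n + 1)) :=
  p.cycleRange.symm * Perm.decomposeFin.symm (0, π)

@[simp]
lemma prependPerm_zero (p : Fin (n + 1)) (π : Perm (Fin n)) : prependPerm p π 0 = p := by
  simp [prependPerm]

@[simp]
lemma prependPerm_succ (p : Fin (n + 1)) (π : Perm (Fin n)) (i : Fin n) :
    prependPerm p π i.succ = p.succAbove (π i) := by
  simp [prependPerm]

lemma prependPerm_bijective :
    Function.Bijective fun x : Fin (n + 1) × Perm (Fin n) => prependPerm x.1 x.2 := by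
  refine (Fintype.bijective_iff_injective_and_card _).2 ⟨?_, ?_⟩
  · rintro ⟨p, π⟩ ⟨q, ρ⟩ h
    obtain rfl : p = q := by simpa using DFunLike.congr_fun h 0
    simpa [prependPerm] using h
  · simp [Fintype.card_perm, Nat.factorial_succ]

end Prepend

section BlockStarts

variable {n : ℕ} {π : Perm (Fin n)}

/-- The positions of `π` whose value is not consecutive to any earlier value: the kinks together
with the first position. There a new block of consecutive values is opened. -/
noncomputable def blockStarts (π : Perm (Fin n)) : Finset (Fin n) :=
  {i | ∀ j < i, (π j : ℕ) + 1 ≠ π i ∧ (π i : ℕ) + 1 ≠ π j}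

lemma mem_blockStarts {i : Fin n} :
    i ∈ blockStarts π ↔ ∀ j < i, (π j : ℕ) + 1 ≠ π i ∧ (π i : ℕ) + 1 ≠ π j := by
  simp [blockStarts]

lemma card_blockStarts (π : Perm (Fin (n + 1))) : #(blockStarts π) = numKinks π + 1 := by
  have zero_mem : 0 ∈ blockStarts π := by simp [mem_blockStarts]
  have kinks_eq : numKinks π = #((blockStarts π).erase 0) := by
    refine congrArg card (Finset.ext fun i => ?_)
    simp only [mem_filter, mem_univ, true_and, mem_erase, mem_blockStarts, ← Fin.lt_def, ne_eq,
      Fin.ext_iff, Fin.val_zero, Nat.pos_iff_ne_zero]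
  rw [kinks_eq, card_erase_add_one zero_mem]

lemma val_add_one_ne_of_mem_blockStarts {i j : Fin n} (hi : i ∈ blockStarts π)
    (hj : j ∈ blockStarts π) : (π i : ℕ) + 1 ≠ π j := by
  rcases lt_trichotomy i j with hij | rfl | hji
  · exact (mem_blockStarts.1 hj i hij).1
  · exact Nat.succ_ne_self _
  · exact (mem_blockStarts.1 hi j hji).2

/-- The gaps next to the value of a block start, where gap `p : Fin (n + 1)` lies between the values
`p - 1` and `p` of `Fin n`. -/
noncomputable def startGaps (π : Perm (Fin n)) : Finset (Fin (n + 1)) :=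
  (blockStarts π).image (fun i => (π i).castSucc) ∪ (blockStarts π).image (fun i => (π i).succ)

lemma mem_startGaps {p : Fin (n + 1)} :
    p ∈ startGaps π ↔ ∃ i ∈ blockStarts π, (π i).castSucc = p ∨ (π i).succ = p := by
  grind [startGaps]

lemma card_startGaps (π : Perm (Fin n)) : #(startGaps π) = 2 * #(blockStarts π) := by
  have castSucc_injective : Function.Injective fun i => (π i).castSucc :=
    (Fin.castSucc_injective n).comp π.injective
  have succ_injective : Function.Injective fun i => (π i).succ :=
    (Fin.succ_injective n).comp π.injective
  have images_disjoint : Disjoint ((blockStarts π).image fun i => (π i).castSucc)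
      ((blockStarts π).image fun i => (π i).succ) := by
    simp only [disjoint_left, mem_image, not_exists, not_and, forall_exists_index, and_imp]
    rintro _ i hi rfl j hj h
    exact val_add_one_ne_of_mem_blockStarts hj hi (Fin.ext_iff.1 h)
  rw [startGaps, card_union_of_disjoint images_disjoint,
    card_image_of_injective _ castSucc_injective, card_image_of_injective _ succ_injective, two_mul]

lemma eq_of_mem_blockStarts_of_gap_eq {p : Fin (n + 1)} {i j : Fin n} (hi : i ∈ blockStarts π)
    (hj : j ∈ blockStarts π) (hip : (π i).castSucc = p ∨ (π i).succ = p)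
    (hjp : (π j).castSucc = p ∨ (π j).succ = p) : i = j := by
  have hij := val_add_one_ne_of_mem_blockStarts hi hj
  have hji := val_add_one_ne_of_mem_blockStarts hj hi
  refine π.injective (Fin.ext ?_)
  simp only [Fin.ext_iff, Fin.val_castSucc, Fin.val_succ] at hip hjp
  omega

end BlockStarts

section Recurrence

variable {n : ℕ}

lemma numKinks_prependPerm (p : Fin (n + 1)) (π : Perm (Fin n)) :
    numKinks (prependPerm p π) =
      #{i ∈ blockStarts π | ¬((π i).castSucc = p ∨ (π i).succ = p)} := by
  rw [numKinks, Fin.card_filter_univ_succ, if_neg (by simp)]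
  refine congrArg card (Finset.ext fun i => ?_)
  simp only [mem_filter, mem_univ, true_and, mem_blockStarts, Fin.forall_fin_succ,
    prependPerm_zero, prependPerm_succ, ne_eq, val_add_one_eq_val_succAbove_iff,
    val_succAbove_add_one_eq_val_iff, val_succAbove_add_one_eq_iff, ← not_or, Fin.val_zero,
    Fin.val_succ, Nat.succ_pos, forall_const, add_lt_add_iff_right, Fin.lt_def]
  rw [and_comm]
  -- A pair of consecutive values is separated only if `p` is consecutive to both of them.
  refine and_congr_left fun hi => forall₂_congr fun j _ => ?_
  grind

lemma numKinks_prependPerm_eq_ite (p : Fin (n + 2)) (π : Perm (Fin (n + 1))) :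
    numKinks (prependPerm p π) = if p ∈ startGaps π then numKinks π else numKinks π + 1 := by
  rw [numKinks_prependPerm, ← card_blockStarts]
  split_ifs with hp
  · obtain ⟨i, hi, hip⟩ := mem_startGaps.1 hp
    have filter_eq : {j ∈ blockStarts π | ¬((π j).castSucc = p ∨ (π j).succ = p)} =
        (blockStarts π).erase i := by
      ext j
      have eq_of_near := fun hj hjp => eq_of_mem_blockStarts_of_gap_eq (j := j) hi hj hip hjp
      grind
    rw [filter_eq, card_erase_of_mem hi, card_blockStarts, Nat.add_sub_cancel]
  · have not_near : ∀ i ∈ blockStarts π, ¬((π i).castSucc = p ∨ (π i).succ = p) :=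
      fun i hi hip => hp (mem_startGaps.2 ⟨i, hi, hip⟩)
    rw [filter_true_of_mem not_near]

lemma card_startGaps_eq_numKinks (π : Perm (Fin (n + 1))) :
    #(startGaps π) = 2 * (numKinks π + 1) := by
  rw [card_startGaps, card_blockStarts]

lemma two_mul_numKinks_le (π : Perm (Fin (n + 1))) : 2 * numKinks π ≤ n := by
  have h := card_le_univ (startGaps π)
  rw [card_startGaps_eq_numKinks, Fintype.card_fin] at h
  omega

lemma F_succ_eq_sum (n d : ℕ) :
    F (n + 1) d = ∑ π : Perm (Fin n), #{p | numKinks (prependPerm p π) = d} := by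
  simp only [F, card_filter]
  rw [← prependPerm_bijective.sum_comp, Fintype.sum_prod_type_right]

lemma card_prependPerm_numKinks_eq_zero (π : Perm (Fin (n + 1))) :
    #{p | numKinks (prependPerm p π) = 0} = if numKinks π = 0 then 2 else 0 := by
  simp only [numKinks_prependPerm_eq_ite, ite_eq_iff, Nat.succ_ne_zero, and_false, or_false]
  split_ifs with hk
  · simpa [hk] using card_startGaps_eq_numKinks π
  · simp [hk]

lemma card_prependPerm_numKinks_eq_succ (π : Perm (Fin (n + 1))) (d : ℕ) :
    #{p | numKinks (prependPerm p π) = d + 1} =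
      if numKinks π = d + 1 then 2 * (d + 2) else if numKinks π = d then n - 2 * d else 0 := by
  simp only [numKinks_prependPerm_eq_ite]
  split_ifs with same one_more
  · simpa [same] using card_startGaps_eq_numKinks π
  · have filter_eq : ({p | (if p ∈ startGaps π then numKinks π else numKinks π + 1) = d + 1} :
        Finset (Fin (n + 2))) = (startGaps π)ᶜ := by
      ext p
      simp [one_more]
    rw [filter_eq, card_compl, card_startGaps_eq_numKinks, Fintype.card_fin, one_more]
    omega
  · simp only [card_eq_zero, filter_eq_empty_iff]
    grind

lemma F_add_two_zero (n : ℕ) : F (n + 2) 0 = 2 * F (n + 1) 0 := by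
  simp only [F_succ_eq_sum (n + 1), card_prependPerm_numKinks_eq_zero]
  rw [F, card_filter, mul_sum]
  simp

/-- The truncated `n - 2 * d` is harmless: `F (n + 1) d = 0` when `n < 2 * d`. -/
lemma F_add_two_succ (n d : ℕ) :
    F (n + 2) (d + 1) = 2 * (d + 2) * F (n + 1) (d + 1) + (n - 2 * d) * F (n + 1) d := by
  simp only [F_succ_eq_sum (n + 1), card_prependPerm_numKinks_eq_succ]
  simp only [F, card_filter, mul_sum, ← sum_add_distrib]
  refine sum_congr rfl fun π _ => ?_
  split_ifs <;> omega

lemma F_succ_eq_zero {n d : ℕ} (h : n < 2 * d) : F (n + 1) d = 0 := by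
  refine card_eq_zero.2 (filter_eq_empty_iff.2 fun π _ hπ => ?_)
  have := two_mul_numKinks_le π
  omega

lemma cast_F_add_two_succ (R : Type*) [CommRing R] (n d : ℕ) :
    (F (n + 2) (d + 1) : R) =
      2 * (d + 2) * F (n + 1) (d + 1) + (n - 2 * d) * F (n + 1) d := by
  rw [F_add_two_succ]
  rcases lt_or_ge n (2 * d) with h | h
  · simp [F_succ_eq_zero h]
  · simp [Nat.cast_sub h]

lemma F_one_zero : F 1 0 = 1 := by
  have numKinks_eq_zero (π : Perm (Fin 1)) : numKinks π = 0 := by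
    have := two_mul_numKinks_le π
    omega
  simp [F, numKinks_eq_zero]

end Recurrence

section KinkSeries

open PowerSeries

variable (R : Type*) [CommRing R]

/-- The generating function `∑ F (n + 1) d Xⁿ` of the permutations with `d` kinks. The shift by one
leaves out the empty permutation, to which the recurrences for `F` do not extend. -/
noncomputable def kinkSeries (d : ℕ) : R⟦X⟧ := mk fun n => (F (n + 1) d : R)

lemma kinkSeries_zero_eq : kinkSeries R 0 = 1 + X * (2 • kinkSeries R 0) := by
  ext (_ | n)
  · simp [kinkSeries, F_one_zero]
  · rw [map_add, coeff_succ_X_mul, map_nsmul]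
    simp [kinkSeries, coeff_one, F_add_two_zero]

lemma kinkSeries_succ_eq (d : ℕ) :
    kinkSeries R (d + 1) = X * ((2 * (d + 2)) • kinkSeries R (d + 1) +
      (X * d⁄dX R (kinkSeries R d) - (2 * d) • kinkSeries R d)) := by
  ext (_ | n)
  · simp [kinkSeries, F_succ_eq_zero]
  · rw [coeff_succ_X_mul, map_add, map_sub, map_nsmul, map_nsmul, coeff_X_mul_derivative]
    simp only [kinkSeries, coeff_mk, cast_F_add_two_succ, nsmul_eq_mul]
    push_cast
    ring

lemma kinkSeries_one_mul :
    kinkSeries R 1 * ((1 - 2 * X) ^ 2 * (1 - 4 * X)) = 2 * X ^ 2 := by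
  have eq_zero : (1 - 2 * X) * kinkSeries R 0 = 1 := by
    linear_combination kinkSeries_zero_eq R
  have deriv_zero : (1 - 2 * X) * d⁄dX R (kinkSeries R 0) - 2 * kinkSeries R 0 = 0 := by
    have h := congrArg (d⁄dX R) eq_zero
    simp only [Derivation.leibniz, Derivation.map_one_eq_zero, map_sub, derivative_X,
      derivative_ofNat, smul_eq_mul] at h
    linear_combination h
  have eq_one : (1 - 4 * X) * kinkSeries R 1 = X ^ 2 * d⁄dX R (kinkSeries R 0) := by
    linear_combination kinkSeries_succ_eq R 0
  linear_combination (1 - 2 * X) ^ 2 * eq_one + X ^ 2 * (1 - 2 * X) * deriv_zero +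
    2 * X ^ 2 * eq_zero

lemma kinkSeries_two_mul :
    kinkSeries R 2 * ((1 - 2 * X) ^ 3 * (1 - 4 * X) ^ 2 * (1 - 6 * X)) =
      16 * X ^ 4 * (1 - 3 * X) := by
  have eq_one := kinkSeries_one_mul R
  have deriv_one : (1 - 2 * X) ^ 2 * (1 - 4 * X) * d⁄dX R (kinkSeries R 1) -
      8 * (1 - 2 * X) * (1 - 3 * X) * kinkSeries R 1 = 4 * X := by
    have h := congrArg (d⁄dX R) eq_one
    simp only [Derivation.leibniz, Derivation.leibniz_pow, Derivation.map_one_eq_zero, map_sub,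
      derivative_X, derivative_ofNat, smul_eq_mul] at h
    linear_combination h
  have eq_two : (1 - 6 * X) * kinkSeries R 2 =
      X * (X * d⁄dX R (kinkSeries R 1) - 2 * kinkSeries R 1) := by
    linear_combination kinkSeries_succ_eq R 1
  linear_combination (1 - 2 * X) ^ 3 * (1 - 4 * X) ^ 2 * eq_two +
    X ^ 2 * (1 - 2 * X) * (1 - 4 * X) * deriv_one +
    (8 * X ^ 2 * (1 - 3 * X) - 2 * X * (1 - 2 * X) * (1 - 4 * X)) * eq_one

lemma mk_ite_F_eq_X_mul_kinkSeries (d : ℕ) :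
    (mk fun n => if 2 * d + 1 ≤ n then (F n d : R) else 0) = X * kinkSeries R d := by
  ext (_ | n)
  · simp
  · rw [coeff_succ_X_mul, kinkSeries, coeff_mk, coeff_mk]
    split_ifs with hn
    · rfl
    · rw [F_succ_eq_zero (by omega), Nat.cast_zero]

end KinkSeries

theorem gf_two_kinks_general (R : Type*) [CommRing R] :
    (PowerSeries.mk fun n => if 5 ≤ n then (F n 2 : R) else 0)
        * ((1 - 2 * PowerSeries.X) ^ 3 * (1 - 4 * PowerSeries.X) ^ 2
            * (1 - 6 * PowerSeries.X))
      = 16 * PowerSeries.X ^ 5 * (1 - 3 * PowerSeries.X) := by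
  have series_eq : (PowerSeries.mk fun n => if 5 ≤ n then (F n 2 : R) else 0) =
      PowerSeries.X * kinkSeries R 2 := mk_ite_F_eq_X_mul_kinkSeries R 2
  rw [series_eq, mul_assoc, kinkSeries_two_mul]
  ring

theorem gf_two_kinks :
    (PowerSeries.mk fun n => if 5 ≤ n then (F n 2 : ℚ) else 0)
        * ((1 - 2 * PowerSeries.X) ^ 3 * (1 - 4 * PowerSeries.X) ^ 2
            * (1 - 6 * PowerSeries.X))
      = 16 * PowerSeries.X ^ 5 * (1 - 3 * PowerSeries.X) :=
  gf_two_kinks_general ℚ
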